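/- Let k ≥ 1 with k ≤ |X|, let η_1, …, η_k ∈ (0, 1], and let S_0 = ∅, S_{i+1} = S_i ∪ {j_i} for i = 0, …, k−1, where each j_i ∈ X \ S_i satisfies f(S_i ∪ {j_i}) − f(S_i) ≥ η_{i+1} · max_{j ∈ X \ S_i} (f(S_i ∪ {j}) − f(S_i)) (an approximate greedy algorithm). Then for every subset O ⊆ X with |O| ≤ k, f(S_k) ≥ (1 − ∏_{i=1}^{k} (1 − η_i/(c·k))) · f(O). -/

import Mathlib

open Finset BigOperators

/-!
Let `O` be a set of at most `m` elements. Adding the elements of `O \ S` to `S` one at a time and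
comparing each marginal gain with the gain at `S` yields
`f (S ∪ O) - f S ≤ c * ∑ j ∈ O \ S, (f (S ∪ {j}) - f S)`. A greedy step of quality `η` captures at
least `η` times every summand, hence at least the fraction `η / (c * m)` of the gap `f O - f S`.
So each step shrinks the gap by the factor `1 - η / (c * m)`, and these factors multiply up.
-/

lemma le_prod_Icc_mul_of_succ_le_mul {R : Type*} [CommSemiring R] [PartialOrder R]
    [IsOrderedRing R] {u r : ℕ → R} {n : ℕ}
    (hr : ∀ i < n, 0 ≤ r (i + 1)) (hu : ∀ i < n, u (i + 1) ≤ r (i + 1) * u i) :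
    u n ≤ (∏ i ∈ Icc 1 n, r i) * u 0 := by
  induction n with
  | zero => simp
  | succ n ih =>
    calc u (n + 1) ≤ r (n + 1) * u n := hu n n.lt_succ_self
      _ ≤ r (n + 1) * ((∏ i ∈ Icc 1 n, r i) * u 0) :=
          mul_le_mul_of_nonneg_left
            (ih (fun i hi => hr i (by lia)) fun i hi => hu i (by lia)) (hr n n.lt_succ_self)
      _ = (∏ i ∈ Icc 1 (n + 1), r i) * u 0 := by
          rw [prod_Icc_succ_top (by lia)]
          ring

section SetFunction

variable {X R : Type*} [DecidableEq X]

/-- The gain `f_j(S) = f (S ∪ {j}) - f S` from adding `j` to `S`. -/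
def marginalGain [Sub R] (f : Finset X → R) (j : X) (S : Finset X) : R :=
  f (insert j S) - f S

/-- The maximum element-wise curvature of `f` is at most `c`: enlarging the base set multiplies
the marginal gain of a new element by at most `c`. The case `c = 1` is submodularity. The bound is
phrased without quotients, so that no marginal gain needs to be nonzero. -/
def HasCurvatureLE [Sub R] [Mul R] [LE R] (f : Finset X → R) (c : R) : Prop :=
  ∀ ⦃S T : Finset X⦄, S ⊆ T → ∀ ⦃j : X⦄, j ∉ T → marginalGain f j T ≤ c * marginalGain f j S

/-- One step `S ↦ T` of an approximate greedy algorithm: it increases `f` by at least `η` times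
the largest marginal gain at `S`. The step may add any number of elements to `S`, and the maximum
is expressed as a bound on every marginal gain, so that `S` may be the whole of `X`. -/
structure IsApproxGreedyStep [Sub R] [Mul R] [LE R] (f : Finset X → R) (η : R)
    (S T : Finset X) : Prop where
  subset : S ⊆ T
  mul_marginalGain_le : ∀ j ∉ S, η * marginalGain f j S ≤ f T - f S

section OrderedRing

variable [CommRing R] [PartialOrder R] [IsOrderedRing R] {f : Finset X → R} {c η : R}
  {S T O : Finset X} {m : ℕ}

lemma HasCurvatureLE.sub_le_mul_sum_marginalGain (hf : HasCurvatureLE f c)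
    (hSO : Disjoint S O) : f (S ∪ O) - f S ≤ c * ∑ j ∈ O, marginalGain f j S := by
  induction O using Finset.induction_on with
  | empty => simp
  | insert j O hj ih =>
    obtain ⟨hjS, hSO⟩ := disjoint_insert_right.1 hSO
    have hgain : marginalGain f j (S ∪ O) ≤ c * marginalGain f j S :=
      hf subset_union_left (by simp [hjS, hj])
    calc f (S ∪ insert j O) - f S = marginalGain f j (S ∪ O) + (f (S ∪ O) - f S) := by
          rw [union_insert, marginalGain, sub_add_sub_cancel]
      _ ≤ c * marginalGain f j S + c * ∑ j ∈ O, marginalGain f j S :=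
          add_le_add hgain (ih hSO)
      _ = c * ∑ j ∈ insert j O, marginalGain f j S := by rw [sum_insert hj, mul_add]

lemma IsApproxGreedyStep.mul_sum_marginalGain_le (hstep : IsApproxGreedyStep f η S T)
    (hSO : Disjoint S O) : η * ∑ j ∈ O, marginalGain f j S ≤ #O * (f T - f S) := by
  rw [mul_sum, ← nsmul_eq_mul]
  exact sum_le_card_nsmul _ _ _ fun j hj =>
    hstep.mul_marginalGain_le j (disjoint_right.1 hSO hj)

lemma IsApproxGreedyStep.mul_gap_le (hstep : IsApproxGreedyStep f η S T) (hmono : Monotone f)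
    (hcurv : HasCurvatureLE f c) (hc : 0 ≤ c) (hη : 0 ≤ η) (hO : #O ≤ m) :
    η * (f O - f S) ≤ c * m * (f T - f S) := by
  have hgain : 0 ≤ f T - f S := sub_nonneg.2 (hmono hstep.subset)
  have hcard : #(O \ S) ≤ m := (card_le_card sdiff_subset).trans hO
  calc η * (f O - f S) ≤ η * (f (S ∪ O \ S) - f S) := by
        rw [union_sdiff_self_eq_union]
        gcongr
        exact hmono subset_union_right
    _ ≤ η * (c * ∑ j ∈ O \ S, marginalGain f j S) := by
        gcongr
        exact hcurv.sub_le_mul_sum_marginalGain disjoint_sdiff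
    _ = c * (η * ∑ j ∈ O \ S, marginalGain f j S) := mul_left_comm _ _ _
    _ ≤ c * (#(O \ S) * (f T - f S)) :=
        mul_le_mul_of_nonneg_left (hstep.mul_sum_marginalGain_le disjoint_sdiff) hc
    _ ≤ c * (m * (f T - f S)) := by gcongr
    _ = c * m * (f T - f S) := (mul_assoc _ _ _).symm

end OrderedRing

variable [Field R] [LinearOrder R] [IsStrictOrderedRing R] {f : Finset X → R} {c : R}
  {O : Finset X} {m : ℕ}

lemma IsApproxGreedyStep.gap_le_mul_gap {η : R} {S T : Finset X}
    (hstep : IsApproxGreedyStep f η S T) (hmono : Monotone f) (hcurv : HasCurvatureLE f c)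
    (hc : 0 < c) (hη : 0 ≤ η) (hm : 0 < m) (hO : #O ≤ m) :
    f O - f T ≤ (1 - η / (c * m)) * (f O - f S) := by
  have hcm : 0 < c * m := by positivity
  have hprogress : η / (c * m) * (f O - f S) ≤ f T - f S := by
    rw [div_mul_eq_mul_div, div_le_iff₀' hcm]
    exact hstep.mul_gap_le hmono hcurv hc.le hη hO
  linarith

theorem approximate_greedy_guarantee_general (hmono : Monotone f) (hc : 1 ≤ c)
    (hcurv : HasCurvatureLE f c) {n : ℕ} {η : ℕ → R} (hη : ∀ i ∈ Icc 1 n, 0 ≤ η i ∧ η i ≤ 1)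
    {S : ℕ → Finset X} (hstep : ∀ i < n, IsApproxGreedyStep f (η (i + 1)) (S i) (S (i + 1)))
    (hm : 0 < m) (hO : #O ≤ m) :
    (1 - ∏ i ∈ Icc 1 n, (1 - η i / (c * m))) * (f O - f (S 0)) ≤ f (S n) - f (S 0) := by
  have hηstep (i : ℕ) (hi : i < n) : 0 ≤ η (i + 1) ∧ η (i + 1) ≤ 1 :=
    hη (i + 1) (mem_Icc.2 (by lia))
  have hcm : 1 ≤ c * m := one_le_mul_of_one_le_of_one_le hc (mod_cast hm)
  have hfactor (i : ℕ) (hi : i < n) : 0 ≤ 1 - η (i + 1) / (c * m) :=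
    sub_nonneg.2 (div_le_one_of_le₀ ((hηstep i hi).2.trans hcm) (by positivity))
  have hgap : f O - f (S n) ≤ (∏ i ∈ Icc 1 n, (1 - η i / (c * m))) * (f O - f (S 0)) :=
    le_prod_Icc_mul_of_succ_le_mul (u := fun i => f O - f (S i)) hfactor fun i hi =>
      (hstep i hi).gap_le_mul_gap hmono hcurv (by positivity) (hηstep i hi).1 hm hO
  linarith

end SetFunction

/-- Let `X` be a finite set and `f` a monotone nondecreasing set function with `f(∅) = 0`
whose maximum element-wise curvature is at most `c` (with `c ≥ 1`). Let `k ≥ 1` with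
`k ≤ |X|`, let `η_1, …, η_k ∈ (0, 1]`, and let `S_0 = ∅`, `S_{i+1} = S_i ∪ {j_i}`, where
each `j_i ∈ X \ S_i` satisfies
`f(S_i ∪ {j_i}) − f(S_i) ≥ η_{i+1} · max_{j ∈ X \ S_i} (f(S_i ∪ {j}) − f(S_i))` (an
approximate greedy algorithm). Then for every subset `O ⊆ X` with `|O| ≤ k`,
`f(S_k) ≥ (1 − ∏_{i=1}^{k} (1 − η_i/(c·k)))·f(O)`. -/
theorem approximate_greedy_guarantee {X : Type*} [Fintype X] [DecidableEq X]
    (f : Finset X → ℝ)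
    (hmono : ∀ S T : Finset X, S ⊆ T → f S ≤ f T)
    (hempty : f ∅ = 0)
    (c : ℝ) (hc : 1 ≤ c)
    (hcurv : ∀ S T : Finset X, ∀ j : X, S ⊆ T → j ∉ T →
      f (insert j T) - f T ≤ c * (f (insert j S) - f S))
    (k : ℕ) (hk : 1 ≤ k) (hkX : k ≤ Fintype.card X)
    (η : ℕ → ℝ) (hη : ∀ i ∈ Finset.Icc 1 k, 0 < η i ∧ η i ≤ 1)
    (S : ℕ → Finset X) (jsel : ℕ → X)
    (hS0 : S 0 = ∅)
    (hstep : ∀ i < k, S (i + 1) = insert (jsel i) (S i))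
    (hnotmem : ∀ i < k, jsel i ∉ S i)
    (happrox : ∀ i < k, ∀ j, j ∉ S i →
      η (i + 1) * (f (insert j (S i)) - f (S i)) ≤ f (insert (jsel i) (S i)) - f (S i))
    (O : Finset X) (hO : O.card ≤ k) :
    (1 - ∏ i ∈ Finset.Icc 1 k, (1 - η i / (c * k))) * f O ≤ f (S k) := by
  have hgreedy (i : ℕ) (hi : i < k) : IsApproxGreedyStep f (η (i + 1)) (S i) (S (i + 1)) := by
    rw [hstep i hi]
    exact ⟨subset_insert _ _, happrox i hi⟩
  simpa only [hS0, hempty, sub_zero] using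
    approximate_greedy_guarantee_general (fun S T => hmono S T) hc
      (fun S T hST j hj => hcurv S T j hST hj) (fun i hi => (hη i hi).imp_left le_of_lt)
      hgreedy hk hO
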